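/- Let m, n ≥ 1 with m ≤ 6 or n ≤ 6, and let λ = ⟦m,n⟧ be the product poset [1,m] × [1,n]. Then q_2(λ) = 9 if m = n = 6, and q_2(λ) = τ_2(mn) otherwise. -/

import Mathlib

/-!
Unfolding the recursion, `q_2(λ) ≤ t` says that `λ` can be emptied by successively removing
principal up-sets (of what is left) with at most `t, t - 1, …, 1` elements. Hence
`|λ| ≤ T_2(t)`, which gives the lower bound `τ_2(mn)` (`card_le_T2`).

For the `6 × 6` square, `36 = T_2(8)`, so `q_2 ≤ 8` would force every removed set to have exactly
the allowed size. What is left is always a Young diagram, and a finite search over diagrams shows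
that no such sequence exists (`nine_le_six_six`).

For the upper bound let `m ≤ 6` be the number of rows. Removing an up-set from a Young diagram cuts
all rows from some row on down to a common length. By monotonicity and strong induction on `t` it
suffices to exhibit, for each budget `t`, a *block*: `p ≥ 1` moves with pieces of sizes
`t, t - 1, …, t - p + 1` that remove exactly a set of full columns from a rectangle with `m` rows,
so that a rectangle fitting the budget `t - p` is left (`qk_rect_le`). For large `t` such blocks
exist uniformly in each residue class of `t` modulo a small period: writing `t = M k + r`, all row
lengths are linear forms in `k`, and the table `blocks` together with the symbolic checker `run`
(sound by `qk_le_of_run`) handles all `k ≥ 0` at once. The remaining small `t` have individual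
entries in the table. For `m = 6` the budget `8` is excluded; there only `6 × 5` is needed, which
is the transpose of `5 × 6`.
-/

open Classical in
/-- The query function `q_k(λ)`: `q_k(∅) = 0`, `q_1(λ) = |λ|`, and for `k > 1` and
`λ ≠ ∅`, `q_k(λ) = 1 + min_{u ∈ λ} max {q_k(λ_{⋡u}), q_{k-1}(λ_{≻u})}`. -/
noncomputable def qk {α : Type*} [PartialOrder α] (k : ℕ) (s : Finset α) : ℕ :=
  if h : s.Nonempty then
    if k ≤ 1 then s.card
    else 1 + s.attach.inf' (Finset.attach_nonempty_iff.mpr h) (fun u =>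
      max (qk k (s.filter fun v => ¬ u.1 ≤ v))
          (qk (k - 1) (s.filter fun v => u.1 < v)))
  else 0
  termination_by (k, s.card)
  decreasing_by
  · apply Prod.Lex.right
    apply Finset.card_lt_card
    rw [Finset.filter_ssubset]
    exact ⟨u.1, u.2, by simp⟩
  · apply Prod.Lex.left
    omega

/-- The `x`-th triangular number `T_2(x) = x(x+1)/2`. -/
def T2 (x : ℕ) : ℕ := x * (x + 1) / 2

/-- `τ_2(x)` is the least nonnegative integer `t` such that `x ≤ T_2(t)`. -/
noncomputable def tau2 (x : ℕ) : ℕ := sInf {t : ℕ | x ≤ T2 t}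

open Finset

/-! ### Elementary properties of `qk 2` -/

lemma two_mul_T2 (x : ℕ) : 2 * T2 x = x * (x + 1) :=
  Nat.mul_div_cancel' (Nat.even_mul_succ_self x).two_dvd

lemma T2_succ (x : ℕ) : T2 (x + 1) = T2 x + (x + 1) := by
  have h1 := two_mul_T2 x
  have h2 := two_mul_T2 (x + 1)
  nlinarith

lemma T2_mono : Monotone T2 :=
  monotone_nat_of_le_succ fun x => by rw [T2_succ]; omega

lemma qk_two_empty : qk 2 (∅ : Finset (ℕ × ℕ)) = 0 := by
  rw [qk]; simp

lemma qk_one (s : Finset (ℕ × ℕ)) : qk 1 s = s.card := by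
  rw [qk]
  by_cases h : s.Nonempty
  · simp [h]
  · simp [not_nonempty_iff_eq_empty.mp h]

open Classical in
lemma card_filter_lt (s : Finset (ℕ × ℕ)) {u : ℕ × ℕ} (hu : u ∈ s) :
    (s.filter fun v => u ≤ v).card = (s.filter fun v => u < v).card + 1 := by
  have h : (s.filter fun v => u ≤ v) = insert u (s.filter fun v => u < v) := by
    ext v
    simp only [mem_filter, mem_insert, le_iff_lt_or_eq]
    constructor
    · rintro ⟨h1, h2 | h2⟩
      · exact Or.inr ⟨h1, h2⟩
      · exact Or.inl h2.symm
    · rintro (rfl | h2)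
      · exact ⟨hu, Or.inr rfl⟩
      · exact ⟨h2.1, Or.inl h2.2⟩
  rw [h, card_insert_of_notMem (by simp)]

open Classical in
/-- Having `q_2 ≤ t + 1` means that either nothing is left, or some principal up-set with at most
`t + 1` elements can be removed so that the rest has `q_2 ≤ t`. -/
lemma qk_two_le_succ_iff (s : Finset (ℕ × ℕ)) (t : ℕ) :
    qk 2 s ≤ t + 1 ↔ s = ∅ ∨ ∃ u ∈ s, (s.filter fun v => u ≤ v).card ≤ t + 1 ∧
      qk 2 (s.filter fun v => ¬ u ≤ v) ≤ t := by
  rcases s.eq_empty_or_nonempty with rfl | hs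
  · simp [qk_two_empty]
  · have key : qk 2 s ≤ t + 1 ↔ ∃ u ∈ s, (s.filter fun v => u < v).card ≤ t ∧
        qk 2 (s.filter fun v => ¬ u ≤ v) ≤ t := by
      rw [qk]
      simp only [hs, dite_true, show ¬ (2 ≤ 1) by omega, if_false]
      rw [add_comm, Nat.add_le_add_iff_right, Finset.inf'_le_iff]
      simp only [mem_attach, true_and, Subtype.exists, max_le_iff]
      refine exists_congr fun u => ?_
      rw [show (2 - 1) = 1 from rfl, qk_one]
      constructor
      · rintro ⟨h0, h1, h2⟩
        exact ⟨h0, h2, by convert h1⟩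
      · rintro ⟨h0, h1, h2⟩
        exact ⟨h0, by convert h2, h1⟩
    rw [key]
    simp only [hs.ne_empty, false_or]
    refine exists_congr fun u => and_congr_right fun hu => ?_
    rw [card_filter_lt s hu, Nat.add_le_add_iff_right]

lemma qk_two_le_zero_iff (s : Finset (ℕ × ℕ)) : qk 2 s ≤ 0 ↔ s = ∅ := by
  constructor
  · intro h
    by_contra hs
    rw [qk] at h
    simp [nonempty_iff_ne_empty.mpr hs] at h
  · rintro rfl
    exact qk_two_empty.le

/-- The `t` removed up-sets have at most `t, t - 1, …, 1` elements. -/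
lemma card_le_T2 (t : ℕ) : ∀ s : Finset (ℕ × ℕ), qk 2 s ≤ t → s.card ≤ T2 t := by
  induction t with
  | zero => intro s h; simp [(qk_two_le_zero_iff s).mp h]
  | succ t ih =>
    intro s h
    rcases (qk_two_le_succ_iff s t).mp h with rfl | ⟨u, _, h1, h2⟩
    · simp
    · have h3 := ih _ h2
      have h4 := card_filter_add_card_filter_not (s := s) (fun v => u ≤ v)
      rw [T2_succ]
      omega

/-- `q_2` does not increase when passing to a down-closed subset. -/
lemma qk_two_mono (t : ℕ) : ∀ s s' : Finset (ℕ × ℕ), s ⊆ s' →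
    (∀ u ∈ s', ∀ v ∈ s, u ≤ v → u ∈ s) → qk 2 s' ≤ t → qk 2 s ≤ t := by
  induction t with
  | zero =>
    intro s s' hs _ h
    rw [qk_two_le_zero_iff] at h ⊢
    exact subset_empty.mp (h ▸ hs)
  | succ t ih =>
    intro s s' hs hl h
    rcases (qk_two_le_succ_iff s' t).mp h with rfl | ⟨u, hu, h1, h2⟩
    · rw [subset_empty.mp hs, qk_two_empty]; omega
    · have h3 : qk 2 (s.filter fun v => ¬ u ≤ v) ≤ t := by
        refine ih _ _ (filter_subset_filter _ hs) ?_ h2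
        intro a ha b hb hab
        simp only [mem_filter] at ha hb ⊢
        exact ⟨hl a ha.1 b hb.1 hab, ha.2⟩
      by_cases hus : u ∈ s
      · exact (qk_two_le_succ_iff s t).mpr (Or.inr ⟨u, hus,
          (card_le_card (filter_subset_filter _ hs)).trans h1, h3⟩)
      · rw [filter_true_of_mem (p := fun v => ¬ u ≤ v)
          fun v hv huv => hus (hl u hu v hv huv)] at h3
        omega

lemma qk_two_swap (t : ℕ) : ∀ s : Finset (ℕ × ℕ), qk 2 s ≤ t →
    qk 2 (s.image Prod.swap) ≤ t := by
  induction t with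
  | zero =>
    intro s h
    rw [qk_two_le_zero_iff] at h ⊢
    simp [h]
  | succ t ih =>
    intro s h
    rcases (qk_two_le_succ_iff s t).mp h with rfl | ⟨u, hu, h1, h2⟩
    · simp [qk_two_empty]
    · refine (qk_two_le_succ_iff _ t).mpr (Or.inr ⟨u.swap, mem_image_of_mem _ hu, ?_, ?_⟩)
      · rw [filter_image]
        simp only [Prod.swap_le_swap]
        exact card_image_le.trans h1
      · rw [filter_image]
        simp only [Prod.swap_le_swap]
        exact ih _ h2

/-! ### Young diagrams -/

/-- The cells of the Young diagram with row lengths `L`, the rows being numbered from `o` on. -/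
def cells : ℕ → List ℕ → Finset (ℕ × ℕ)
  | _, [] => ∅
  | o, a :: L => ({o} ×ˢ Icc 1 a) ∪ cells (o + 1) L

lemma mem_cells {p : ℕ × ℕ} : ∀ {L : List ℕ} {o : ℕ}, p ∈ cells o L ↔
    o ≤ p.1 ∧ 1 ≤ p.2 ∧ ∃ h : p.1 - o < L.length, p.2 ≤ L[p.1 - o]
  | [], o => by simp [cells]
  | a :: L, o => by
    simp only [cells, mem_union, mem_product, mem_singleton, mem_Icc, mem_cells (L := L),
      List.length_cons]
    constructor
    · rintro (⟨h1, h2, h3⟩ | ⟨h1, h2, h3, h4⟩)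
      · exact ⟨h1.ge, h2, by omega, by simpa [h1] using h3⟩
      · refine ⟨by omega, h2, by omega, ?_⟩
        simpa [show p.1 - o = (p.1 - (o + 1)) + 1 by omega] using h4
    · rintro ⟨h1, h2, h3, h4⟩
      rcases h1.eq_or_lt with h5 | h5
      · exact Or.inl ⟨h5.symm, h2, by simpa [← h5] using h4⟩
      · refine Or.inr ⟨h5, h2, by omega, ?_⟩
        simpa [show p.1 - o = (p.1 - (o + 1)) + 1 by omega] using h4

lemma cells_replicate (m n : ℕ) : cells 1 (List.replicate m n) = Icc 1 m ×ˢ Icc 1 n := by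
  ext p
  simp only [mem_cells, List.length_replicate, List.getElem_replicate, mem_product, mem_Icc]
  constructor
  · rintro ⟨h1, h2, h3, h4⟩; omega
  · rintro ⟨h1, h2⟩; exact ⟨by omega, by omega, by omega, by omega⟩

lemma card_cells : ∀ (L : List ℕ) (o : ℕ), (cells o L).card = L.sum
  | [], o => by simp [cells]
  | a :: L, o => by
    rw [cells, card_union_of_disjoint, card_cells L]
    · simp
    · rw [disjoint_left]
      intro p hp hq
      simp only [mem_product, mem_singleton] at hp
      have := (mem_cells.mp hq).1
      omega

/-- The diagram that is left after removing all cells above the cell in row `i` (counted from `0`)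
and column `j + 1`: the rows from the `i`-th on are cut down to length at most `j`. -/
def cut (i j : ℕ) (L : List ℕ) : List ℕ := L.take i ++ (L.drop i).map (min · j)

/-- The number of cells removed by `cut i j`. -/
def cost (i j : ℕ) (L : List ℕ) : ℕ := ((L.drop i).map (· - j)).sum

lemma filter_cells (i j : ℕ) (L : List ℕ) :
    (cells 1 L).filter (fun v => ¬ (i + 1, j + 1) ≤ v) = cells 1 (cut i j L) := by
  ext p
  have hlen : (cut i j L).length = L.length := by simp [cut]; omega
  simp only [mem_filter, mem_cells, hlen, Prod.le_def]
  constructor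
  · rintro ⟨⟨h1, h2, h3, h4⟩, h5⟩
    refine ⟨h1, h2, h3, ?_⟩
    simp only [cut, List.getElem_append, List.length_take, List.getElem_take, List.getElem_map,
      List.getElem_drop]
    split_ifs with h6
    · exact h4
    · have : i + (p.1 - 1 - min i L.length) = p.1 - 1 := by omega
      simp only [this]
      omega
  · rintro ⟨h1, h2, h3, h4⟩
    simp only [cut, List.getElem_append, List.length_take, List.getElem_take, List.getElem_map,
      List.getElem_drop] at h4
    split_ifs at h4 with h6
    · exact ⟨⟨h1, h2, h3, h4⟩, by omega⟩
    · have : i + (p.1 - 1 - min i L.length) = p.1 - 1 := by omega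
      simp only [this] at h4
      exact ⟨⟨h1, h2, h3, by omega⟩, by omega⟩

lemma sum_map_min_add (j : ℕ) : ∀ L : List ℕ, (L.map (min · j)).sum + (L.map (· - j)).sum = L.sum
  | [] => rfl
  | a :: L => by
    have := sum_map_min_add j L
    simp only [List.map_cons, List.sum_cons]
    omega

lemma card_filter_cells (i j : ℕ) (L : List ℕ) :
    ((cells 1 L).filter (fun v => (i + 1, j + 1) ≤ v)).card = cost i j L := by
  have h1 := card_filter_add_card_filter_not (s := cells 1 L) (fun v => (i + 1, j + 1) ≤ v)
  rw [filter_cells, card_cells, card_cells] at h1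
  have h2 := sum_map_min_add j (L.drop i)
  have h3 : (L.take i).sum + (L.drop i).sum = L.sum := by
    rw [← List.sum_append, List.take_append_drop]
  simp only [cut, List.sum_append] at h1
  simp only [cost]
  omega

lemma qk_cells_le_succ_iff (L : List ℕ) (t : ℕ) : qk 2 (cells 1 L) ≤ t + 1 ↔
    cells 1 L = ∅ ∨ ∃ i j, ∃ h : i < L.length, j < L[i] ∧ cost i j L ≤ t + 1 ∧
      qk 2 (cells 1 (cut i j L)) ≤ t := by
  rw [qk_two_le_succ_iff]
  refine or_congr_right ⟨?_, ?_⟩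
  · rintro ⟨⟨x, y⟩, hu, h1, h2⟩
    obtain ⟨h3, h4, h5, h6⟩ := mem_cells.mp hu
    simp only at h3 h4 h5 h6
    obtain ⟨i, rfl⟩ : ∃ i, x = i + 1 := ⟨x - 1, by omega⟩
    obtain ⟨j, rfl⟩ : ∃ j, y = j + 1 := ⟨y - 1, by omega⟩
    rw [card_filter_cells] at h1
    rw [filter_cells] at h2
    simp only [Nat.add_sub_cancel] at h5 h6
    exact ⟨i, j, h5, by omega, h1, h2⟩
  · rintro ⟨i, j, h, h1, h2, h3⟩
    refine ⟨(i + 1, j + 1), mem_cells.mpr ⟨by simp, by simp, by simpa using h, ?_⟩, ?_, ?_⟩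
    · simpa using h1
    · rwa [card_filter_cells]
    · rwa [filter_cells]

/-! ### The `6 × 6` square -/

/-- Exhaustive search for a sequence of cuts that removes exactly `t, t - 1, …, 1` cells from the
diagram with row lengths `L`. All of its rows should have length at most `6`. -/
def exact6 : ℕ → List ℕ → Bool
  | 0, _ => true
  | t + 1, L => (List.range 6).any fun i => (List.range 6).any fun j =>
      cost i j L == t + 1 && exact6 t (cut i j L)

lemma exact6_of_qk_le (t : ℕ) : ∀ L : List ℕ, L.length = 6 → (∀ a ∈ L, a ≤ 6) → L.sum = T2 t →
    qk 2 (cells 1 L) ≤ t → exact6 t L = true := by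
  induction t with
  | zero => intros; rfl
  | succ t ih =>
    intro L hL h6 hs h
    rcases (qk_cells_le_succ_iff L t).mp h with h0 | ⟨i, j, hi, hj, h1, h2⟩
    · have := card_cells L 1
      rw [h0, card_empty, hs, T2_succ] at this
      omega
    · have hsum : cost i j L + (cut i j L).sum = L.sum := by
        have h3 := card_filter_add_card_filter_not (s := cells 1 L)
          (fun v => (i + 1, j + 1) ≤ v)
        rwa [card_filter_cells, filter_cells, card_cells, card_cells] at h3
      have h4 := card_le_T2 t _ h2
      rw [card_cells] at h4
      rw [T2_succ] at hs
      have h5 := h6 _ (List.getElem_mem hi)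
      simp only [exact6, List.any_eq_true, List.mem_range, Bool.and_eq_true, beq_iff_eq]
      refine ⟨i, by omega, j, by omega, by omega, ih _ ?_ ?_ (by omega) h2⟩
      · simp [cut]; omega
      · intro a ha
        simp only [cut, List.mem_append, List.mem_map] at ha
        rcases ha with ha | ⟨b, hb, rfl⟩
        · exact h6 a (List.mem_of_mem_take ha)
        · exact (min_le_left _ _).trans (h6 b (List.mem_of_mem_drop hb))

lemma nine_le_six_six : 9 ≤ qk 2 (Icc 1 6 ×ˢ Icc 1 6) := by
  by_contra h
  have h1 := exact6_of_qk_le 8 (List.replicate 6 6) rfl (by simp) (by decide)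
    (by rw [cells_replicate]; omega)
  have h2 : exact6 8 (List.replicate 6 6) = false := by decide +kernel
  rw [h2] at h1
  exact Bool.false_ne_true h1

/-! ### Block strategies -/

/-- The value at `k` of the linear form `a.1 * k + a.2`. -/
def ev (k : ℕ) (a : ℕ × ℕ) : ℕ := a.1 * k + a.2

/-- The column at which a cut is made, as a linear form in `k`, when a piece of size `s` is to be
taken from the rows `i, …, l` of `x`, where `mv = 10 * i + l`: these rows, with total length `S`,
are levelled to the common length `(S - s) / (l + 1 - i)`, the constant term being rounded up. -/
def level (s : ℕ × ℕ) (mv : ℕ) (x : List (ℕ × ℕ)) : ℕ × ℕ :=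
  let q := mv % 10 + 1 - mv / 10
  let mid := (x.drop (mv / 10)).take q
  (((mid.map Prod.fst).sum - s.1) / q, ((mid.map Prod.snd).sum - s.2 + (q - 1)) / q)

/-- Checks symbolically that, for every `k`, the given moves empty the diagram with rows
`ev k a`, `a ∈ x`, where the successive pieces have at most `M * k + s, M * k + s - 1, …` cells.
All row lengths are linear forms in `k ≥ 0`, compared coefficientwise. -/
def run (M : ℕ) : ℕ → List ℕ → List (ℕ × ℕ) → Bool
  | _, [], x => x.all fun a => a == (0, 0)
  | s, mv :: ms, x =>
    let i := mv / 10
    let j := level (M, s) mv x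
    (x.drop i).all (fun a => (a.1 ≤ j.1 && a.2 ≤ j.2) || (j.1 ≤ a.1 && j.2 ≤ a.2)) &&
    ((x.drop i).take 1).any (fun a => j.1 ≤ a.1 && j.2 < a.2) &&
    ((x.drop i).map fun a => a.1 - j.1).sum ≤ M &&
    ((x.drop i).map fun a => a.2 - j.2).sum ≤ s &&
    run M (s - 1) ms (x.take i ++ (x.drop i).map fun a => (min a.1 j.1, min a.2 j.2))

/-- For linear forms that are comparable coefficientwise, the minimum and the truncated difference
are again linear forms. -/
lemma ev_min {a j : ℕ × ℕ} (h : a.1 ≤ j.1 ∧ a.2 ≤ j.2 ∨ j.1 ≤ a.1 ∧ j.2 ≤ a.2) (k n : ℕ) :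
    n + ev k (min a.1 j.1, min a.2 j.2) = min (n + ev k a) (n + ev k j) ∧
    n + ev k a - (n + ev k j) = (a.1 - j.1) * k + (a.2 - j.2) := by
  simp only [ev]
  rcases h with ⟨h1, h2⟩ | ⟨h1, h2⟩
  · have h3 := Nat.mul_le_mul_right k h1
    simp only [min_eq_left h1, min_eq_left h2, Nat.sub_eq_zero_of_le h1, zero_mul]
    omega
  · have h3 := Nat.mul_le_mul_right k h1
    simp only [min_eq_right h1, min_eq_right h2, Nat.sub_mul]
    omega

lemma cost_ev {j : ℕ × ℕ} (k n : ℕ) : ∀ y : List (ℕ × ℕ),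
    (∀ a ∈ y, a.1 ≤ j.1 ∧ a.2 ≤ j.2 ∨ j.1 ≤ a.1 ∧ j.2 ≤ a.2) →
    (y.map fun a => n + ev k a - (n + ev k j)).sum =
      (y.map fun a => a.1 - j.1).sum * k + (y.map fun a => a.2 - j.2).sum
  | [], _ => by simp
  | a :: y, h => by
    have h1 := cost_ev k n y fun b hb => h b (List.mem_cons_of_mem _ hb)
    have h2 := (ev_min (h a List.mem_cons_self) k n).2
    simp only [List.map_cons, List.sum_cons, add_mul]
    omega

/-- Soundness of `run`: the moves may be played on top of a rectangle with `n` columns, which is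
what they leave behind. -/
lemma qk_le_of_run (M k n : ℕ) : ∀ (ms : List ℕ) (s : ℕ) (x : List (ℕ × ℕ)),
    run M s ms x = true → ms.length ≤ s →
    qk 2 (cells 1 (List.replicate x.length n)) ≤ M * k + s - ms.length →
    qk 2 (cells 1 (x.map fun a => n + ev k a)) ≤ M * k + s
  | [], s, x => by
    intro h _ h1
    simp only [run, List.all_eq_true, beq_iff_eq] at h
    rw [List.map_congr_left (g := fun _ => n) fun a ha => by rw [h a ha]; simp [ev],
      List.map_const']
    simpa using h1
  | mv :: ms, s, x => by
    intro h hs h1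
    simp only [run, List.all_eq_true, List.any_eq_true, Bool.and_eq_true, Bool.or_eq_true,
      decide_eq_true_eq] at h
    set i := mv / 10
    set j := level (M, s) mv x
    obtain ⟨⟨⟨⟨h2, a, ha, h3, h3'⟩, h4⟩, h5⟩, h6⟩ := h
    simp only [List.length_cons] at hs h1
    obtain ⟨s, rfl⟩ : ∃ s₁, s = s₁ + 1 := ⟨s - 1, by omega⟩
    have ih := qk_le_of_run M k n ms s _ h6 (by omega) (by
      have hl : (x.take i ++ (x.drop i).map fun a => (min a.1 j.1, min a.2 j.2)).length
        = x.length := by simp; omega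
      rw [hl]
      exact h1.trans (by omega))
    have hi : i < x.length := by
      by_contra hi
      simp [List.drop_eq_nil_of_le (not_lt.mp hi)] at ha
    have ha' : a = x[i] := by
      rw [List.drop_eq_getElem_cons hi] at ha
      simpa only [List.take_succ_cons, List.take_zero, List.mem_singleton] using ha
    refine (qk_cells_le_succ_iff _ (M * k + s)).mpr
      (Or.inr ⟨i, n + ev k j, by simpa using hi, ?_, ?_, ?_⟩)
    · rw [List.getElem_map, ← ha']
      have := Nat.mul_le_mul_right k h3
      simp only [ev]
      omega
    · rw [cost, ← List.map_drop, List.map_map]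
      have h7 := cost_ev k n _ h2
      have h8 := Nat.mul_le_mul_right k h4
      simp only [Function.comp_def]
      omega
    · convert ih using 3
      rw [cut, ← List.map_drop, ← List.map_take, List.map_append, List.map_map, List.map_map]
      congr 1
      exact List.map_congr_left fun a ha => (ev_min (h2 a ha) k n).1.symm

/-- A strategy for the budgets `t = period * k + start`, `k ≥ 0`. Playing `moves`, encoded as in
`level`, removes a block of columns and leaves a rectangle. -/
structure Block where
  /-- The difference of consecutive budgets; `0` for a strategy that is valid only once. -/
  period : ℕ
  /-- The smallest budget. -/
  start : ℕ
  /-- The rows to be levelled at each step. -/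
  moves : List ℕ

/-- The total size `T2 t - T2 (t - p)` of the pieces for `k = 0`, where `p` is the number of
moves. -/
def Block.size (e : Block) : ℕ := T2 e.start - T2 (e.start - e.moves.length)

/-- Validity of a block for rectangles with `m` rows. The pieces fill whole columns exactly, unless
the block uses up its budget, in which case fewer than `m` cells may be wasted. The last condition
prevents a budget of `8` from being left, which would not suffice for the `6 × 6` square. -/
def Block.valid (m : ℕ) (e : Block) : Bool :=
  0 < e.moves.length && e.moves.length ≤ e.start &&
  (e.moves.length * e.period) % m == 0 &&
  (e.size % m == 0 || (e.period == 0 && e.start == e.moves.length)) &&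
  run e.period e.start e.moves
    (List.replicate m (e.moves.length * e.period / m, e.size / m)) &&
  (m != 6 || 8 < e.start - e.moves.length ||
    (e.period == 0 && e.start - e.moves.length != 8))

/-- Block strategies `⟨period, start, moves⟩` for rectangles with `m` rows, `1 ≤ m ≤ 6`. -/
def blocks : ℕ → List Block
  | 1 => [
      ⟨1, 1, [0]⟩]
  | 2 => [
      ⟨2, 2, [1]⟩,
      ⟨2, 3, [11, 0, 1]⟩]
  | 3 => [
      ⟨4, 16, [22, 22, 1, 11, 0, 12, 12, 0, 2]⟩,
      ⟨4, 9, [22, 1, 12, 12, 0, 2]⟩,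
      ⟨4, 14, [22, 11, 22, 0, 1, 12, 12, 0, 2]⟩,
      ⟨4, 19, [22, 1, 22, 11, 12, 12, 0, 0, 2]⟩,
      ⟨3, 3, [2]⟩,
      ⟨0, 2, [12, 0]⟩,
      ⟨0, 4, [12, 1, 12, 0]⟩,
      ⟨0, 5, [22, 1, 11, 0, 0]⟩,
      ⟨0, 7, [22, 11, 12, 0, 0, 0]⟩,
      ⟨0, 8, [12, 2]⟩,
      ⟨0, 10, [12, 22, 11, 0, 0, 2]⟩,
      ⟨0, 11, [22, 11, 12, 0, 0]⟩]
  | 4 => [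
      ⟨4, 4, [3]⟩,
      ⟨4, 17, [33, 12, 23, 23, 11, 0, 1, 3]⟩,
      ⟨4, 10, [33, 22, 11, 0, 3]⟩,
      ⟨4, 15, [33, 22, 23, 1, 11, 0, 3]⟩,
      ⟨0, 3, [23, 11, 0]⟩,
      ⟨0, 5, [3, 3, 23, 11, 0]⟩,
      ⟨0, 6, [23, 1, 13, 13, 0, 0]⟩,
      ⟨0, 7, [33, 2, 22, 1, 11, 0, 0]⟩,
      ⟨0, 9, [13, 23, 1, 23, 11, 0, 13, 0]⟩,
      ⟨0, 11, [33, 22, 23, 1, 11, 0, 1, 1]⟩,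
      ⟨0, 13, [33, 2, 23, 11, 0, 23, 1, 3]⟩]
  | 5 => [
      ⟨8, 24, [14, 44, 33, 2, 12, 34, 12, 0, 14, 4]⟩,
      ⟨8, 65, [44, 3, 44, 23, 33, 1, 12, 34, 22, 11, 0, 34, 12, 0, 4]⟩,
      ⟨8, 50, [34, 44, 12, 23, 1, 44, 33, 12, 12, 0, 13, 34, 12, 0, 4]⟩,
      ⟨8, 51, [44, 23, 44, 1, 33, 34, 12, 22, 11, 34, 12, 0, 0, 14, 4]⟩,
      ⟨8, 68, [14, 44, 23, 44, 23, 33, 34, 1, 1, 2, 22, 11, 0, 14, 4]⟩,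
      ⟨8, 29, [44, 23, 34, 34, 22, 1, 11, 14, 0, 4]⟩,
      ⟨8, 54, [34, 44, 12, 23, 44, 33, 1, 12, 12, 0, 13, 34, 12, 0, 4]⟩,
      ⟨8, 47, [44, 23, 44, 1, 33, 22, 11, 34, 0, 34, 22, 11, 14, 0, 4]⟩,
      ⟨5, 5, [4]⟩,
      ⟨0, 3, [24, 1]⟩,
      ⟨0, 4, [34, 2, 12, 0]⟩,
      ⟨0, 6, [24, 1, 34, 2, 12, 0]⟩,
      ⟨0, 7, [24, 14, 14, 0, 24, 11, 0]⟩,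
      ⟨0, 8, [14, 4]⟩,
      ⟨0, 9, [24, 34, 24, 1, 11, 14, 0, 0, 0]⟩,
      ⟨0, 11, [44, 33, 2, 12, 2, 2, 24, 1]⟩,
      ⟨0, 12, [14, 44, 23, 1, 3, 34, 22, 11, 0, 1]⟩,
      ⟨0, 13, [44, 13, 34, 2, 2, 12, 2]⟩,
      ⟨0, 14, [34, 24, 1, 4]⟩,
      ⟨0, 16, [14, 24, 1]⟩,
      ⟨0, 17, [44, 3, 34, 12, 2, 34, 22, 11, 0, 4]⟩,
      ⟨0, 18, [24, 4]⟩,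
      ⟨0, 19, [44, 33, 22, 1, 24, 11, 0, 24, 1]⟩,
      ⟨0, 21, [24, 34, 24, 24, 11, 0, 1, 4]⟩,
      ⟨0, 22, [34, 2, 14, 44, 13, 3, 34, 2, 12, 2]⟩,
      ⟨0, 23, [44, 33, 2, 12, 24, 1, 4]⟩,
      ⟨0, 26, [34, 24, 24, 11, 14, 0, 14, 4]⟩,
      ⟨0, 27, [24, 34, 12, 34, 2, 34, 2, 12, 2, 2]⟩,
      ⟨0, 28, [14, 4]⟩,
      ⟨0, 31, [44, 33, 22, 1, 34, 1, 2, 2]⟩,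
      ⟨0, 33, [24, 4]⟩,
      ⟨0, 34, [34, 2, 14, 4]⟩,
      ⟨0, 36, [14, 44, 23, 1, 34, 2, 2, 4]⟩,
      ⟨0, 38, [34, 24, 1, 14, 4]⟩,
      ⟨0, 39, [24, 44, 13, 23, 1, 3, 34, 12, 2]⟩,
      ⟨0, 41, [44, 3, 13, 34, 2, 2, 24, 1]⟩,
      ⟨0, 42, [24, 44, 3, 13, 23, 1, 34, 12, 14, 0]⟩,
      ⟨0, 43, [44, 33, 22, 1, 24, 1, 4]⟩,
      ⟨0, 44, [34, 24, 1, 4]⟩,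
      ⟨0, 46, [34, 2, 4]⟩,
      ⟨0, 49, [44, 3, 34, 34, 2, 12, 2, 2, 4]⟩,
      ⟨0, 52, [14, 24, 34, 24, 11, 0, 34, 2, 14, 4]⟩,
      ⟨0, 57, [24, 34, 12, 44, 13, 0, 13, 23, 1, 4]⟩]
  | 6 => [
      ⟨12, 12, [5]⟩,
      ⟨12, 37, [55, 34, 45, 12, 35, 12, 0, 45, 2, 13, 3, 5]⟩,
      ⟨12, 26, [45, 35, 35, 22, 25, 11, 0, 5]⟩,
      ⟨12, 27, [35, 45, 35, 22, 11, 0, 5]⟩,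
      ⟨12, 52, [25, 35, 2, 55, 34, 45, 12, 35, 12, 0, 12, 5]⟩,
      ⟨12, 17, [55, 44, 13, 23, 13, 0, 25, 5]⟩,
      ⟨12, 18, [5]⟩,
      ⟨12, 43, [55, 24, 45, 3, 13, 45, 3, 23, 35, 1, 12, 5]⟩,
      ⟨12, 44, [25, 55, 44, 13, 23, 1, 13, 5]⟩,
      ⟨12, 21, [35, 45, 35, 22, 11, 0, 5]⟩,
      ⟨12, 34, [45, 13, 25, 1, 55, 44, 33, 22, 25, 11, 0, 5]⟩,
      ⟨12, 23, [55, 44, 33, 22, 11, 25, 0, 5]⟩,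
      ⟨0, 3, [35, 12, 0]⟩,
      ⟨0, 4, [35, 22, 11, 0]⟩,
      ⟨0, 5, [15, 25, 1]⟩,
      ⟨0, 6, [5]⟩,
      ⟨0, 7, [5, 5, 15, 35, 2, 12, 0]⟩,
      ⟨0, 9, [35, 45, 23, 1, 13, 1, 23, 11, 0]⟩,
      ⟨0, 10, [45, 13, 25, 1, 15, 15, 25, 0, 1]⟩,
      ⟨0, 11, [55, 4, 24, 34, 24, 1, 11, 14, 0, 0, 0]⟩,
      ⟨0, 13, [55, 14, 34, 12, 45, 0, 33, 2, 22, 1, 11, 0, 0]⟩,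
      ⟨0, 14, [45, 35, 12, 15, 0]⟩,
      ⟨0, 15, [15, 45, 35, 12, 15, 15, 0, 25, 15, 0, 15, 0]⟩,
      ⟨0, 16, [25, 35, 45, 23, 11, 0, 25, 1, 5]⟩,
      ⟨0, 19, [55, 24, 4, 14, 24, 1, 45, 3, 35, 12, 15, 0]⟩,
      ⟨0, 20, [45, 35, 35, 22, 11, 0, 25, 1]⟩,
      ⟨0, 22, [45, 13, 45, 3, 23, 35, 1, 12, 5]⟩,
      ⟨0, 25, [15, 25, 5]⟩,
      ⟨0, 28, [25, 15, 45, 35, 35, 22, 11, 0, 2]⟩,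
      ⟨0, 31, [55, 4, 45, 3, 13, 45, 3, 23, 35, 1, 12, 2]⟩,
      ⟨0, 32, [45, 35, 35, 22, 11, 0, 25, 5]⟩,
      ⟨0, 40, [15, 35, 45, 35, 22, 11, 25, 0, 1]⟩]
  | _ => []

/-- The period common to the blocks used for all large budgets. -/
def mainPeriod : ℕ → ℕ
  | 1 => 1
  | 2 => 2
  | 3 => 4
  | 4 => 4
  | 5 => 8
  | _ => 12

lemma blocks_valid : ∀ m ∈ List.range' 1 6, ∀ e ∈ blocks m, e.valid m = true := by
  have h : ((List.range' 1 6).all fun m => (blocks m).all fun e => e.valid m) = true := by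
    decide +kernel
  simpa only [List.all_eq_true] using h

/-- All small budgets that suffice for one column are covered, except the budget `8` for `m = 6`. -/
lemma blocks_cover_small : ∀ m ∈ List.range' 1 6, ∀ t ∈ List.range 68, m ≤ T2 t →
    ¬ (m = 6 ∧ t = 8) → ∃ e ∈ blocks m, e.start ≤ t ∧ e.period ∣ t - e.start := by
  have h : ((List.range' 1 6).all fun m => (List.range 68).all fun t =>
      decide (T2 t < m) || (m == 6 && t == 8) || (blocks m).any fun e =>
        decide (e.start ≤ t) && decide (e.period ∣ t - e.start)) = true := by
    decide +kernel
  simp only [List.all_eq_true, List.any_eq_true, Bool.or_eq_true, Bool.and_eq_true,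
    decide_eq_true_eq, beq_iff_eq] at h
  intro m hm t ht h1 h2
  rcases h m hm t ht with (h3 | h3) | h3
  · omega
  · exact absurd h3 h2
  · exact h3

/-- Every residue class modulo `mainPeriod m` has a block that starts at `68` or earlier. -/
lemma blocks_cover_residues : ∀ m ∈ List.range' 1 6, ∀ r ∈ List.range (mainPeriod m),
    ∃ e ∈ blocks m, e.start ≤ 68 ∧ e.period = mainPeriod m ∧ e.start % mainPeriod m = r := by
  have h : ((List.range' 1 6).all fun m => (List.range (mainPeriod m)).all fun r =>
      (blocks m).any fun e => decide (e.start ≤ 68) && e.period == mainPeriod m &&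
        e.start % mainPeriod m == r) = true := by
    decide +kernel
  simp only [List.all_eq_true, List.any_eq_true, Bool.and_eq_true, decide_eq_true_eq,
    beq_iff_eq, and_assoc] at h
  exact h

lemma blocks_cover {m t : ℕ} (hm : m ∈ List.range' 1 6) (h1 : m ≤ T2 t)
    (h2 : ¬ (m = 6 ∧ t = 8)) : ∃ e ∈ blocks m, e.start ≤ t ∧ e.period ∣ t - e.start := by
  by_cases ht : t < 68
  · exact blocks_cover_small m hm t (List.mem_range.mpr ht) h1 h2
  · have hpos : 0 < mainPeriod m := by unfold mainPeriod; split <;> simp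
    obtain ⟨e, he, h3, h4, h5⟩ := blocks_cover_residues m hm (t % mainPeriod m)
      (List.mem_range.mpr (Nat.mod_lt _ hpos))
    refine ⟨e, he, by omega, ?_⟩
    rw [h4]
    exact (Nat.modEq_iff_dvd' (by omega)).mp h5

/-! ### The upper bound -/

lemma qk_rect_mono (m : ℕ) {n n' t : ℕ} (h : n ≤ n')
    (h' : qk 2 (cells 1 (List.replicate m n')) ≤ t) :
    qk 2 (cells 1 (List.replicate m n)) ≤ t := by
  rw [cells_replicate] at h' ⊢
  refine qk_two_mono t _ _ ?_ ?_ h'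
  · exact product_subset_product_right (Icc_subset_Icc_right h)
  · intro u hu v hv huv
    simp only [mem_product, mem_Icc] at hu hv ⊢
    have := huv.2
    omega

/-- The pieces of a block with `p` moves have total size `p * M * k + (T2 r - T2 (r - p))`. -/
lemma T2_block {M k r p : ℕ} (hp : p ≤ r) :
    T2 (M * k + r) = T2 (M * k + r - p) + p * M * k + (T2 r - T2 (r - p)) := by
  obtain ⟨b, rfl⟩ := Nat.exists_eq_add_of_le' hp
  have h1 := two_mul_T2 (M * k + (b + p))
  have h2 := two_mul_T2 (M * k + b)
  have h3 := two_mul_T2 (b + p)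
  have h4 := two_mul_T2 b
  have h5 : T2 b ≤ T2 (b + p) := T2_mono (by omega)
  rw [show M * k + (b + p) - p = M * k + b by omega, Nat.add_sub_cancel]
  obtain ⟨d, hd⟩ := Nat.exists_eq_add_of_le h5
  rw [hd, Nat.add_sub_cancel_left]
  rw [hd] at h3
  nlinarith

/-- The cardinality bound is sharp for at most six rows, except for budget `8` and six rows. -/
lemma qk_rect_le {m : ℕ} (hm : m ∈ List.range' 1 6) (t : ℕ) : ∀ n : ℕ, m * n ≤ T2 t →
    ¬ (m = 6 ∧ t = 8) → qk 2 (cells 1 (List.replicate m n)) ≤ t := by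
  induction t using Nat.strong_induction_on with
  | _ t ih =>
    intro n hn h8
    rcases Nat.eq_zero_or_pos n with rfl | hpos
    · simp [cells_replicate, qk_two_empty]
    have hm0 : 0 < m := by simp at hm; omega
    obtain ⟨e, he, hst, k, hk⟩ := blocks_cover hm
      ((Nat.le_mul_of_pos_right m hpos).trans hn) h8
    have hv := blocks_valid m hm e he
    simp only [Block.valid, Bool.and_eq_true, Bool.or_eq_true, decide_eq_true_eq, beq_iff_eq,
      bne_iff_ne] at hv
    obtain ⟨⟨⟨⟨⟨hp, hpr⟩, hc⟩, hsz⟩, hrun⟩, hland⟩ := hv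
    obtain rfl : t = e.period * k + e.start := by omega
    have hT := T2_block (M := e.period) (k := k) hpr
    change _ = _ + e.size at hT
    set p := e.moves.length
    -- the number of columns in the block
    set w := ev k (p * e.period / m, e.size / m) with hw
    have hmw : m * w + e.size % m = p * e.period * k + e.size := by
      have h1 := Nat.div_add_mod e.size m
      have h2 := Nat.mul_div_cancel' (Nat.dvd_of_mod_eq_zero hc)
      simp only [hw, ev, mul_add, ← mul_assoc, h2]
      omega
    have hrest : m * (n - w) ≤ T2 (e.period * k + e.start - p) := by
      rw [Nat.mul_sub]
      rcases hsz with h | ⟨h, h'⟩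
      · omega
      · -- the whole budget is used, and a waste of less than `m` cells does not cost a column
        have h1 : T2 (e.period * k + e.start - p) = 0 := by simp [h, h', T2]
        have h2 := Nat.mod_lt e.size hm0
        have h3 : n ≤ w := by
          by_contra hcon
          have := Nat.mul_le_mul_left m (Nat.succ_le_of_lt (not_le.mp hcon))
          rw [Nat.mul_succ] at this
          omega
        have := Nat.mul_le_mul_left m h3
        omega
    have hne : ¬ (m = 6 ∧ e.period * k + e.start - p = 8) := by
      rintro ⟨h1, h2⟩
      rcases hland with (h | h) | ⟨h, h'⟩
      · exact h h1
      · have := Nat.zero_le (e.period * k)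
        omega
      · rw [h, zero_mul, zero_add] at h2
        exact h' h2
    have hlow := ih _ (by omega) (n - w) hrest hne
    have hfin := qk_le_of_run e.period k (n - w) e.moves e.start _ hrun hpr
      (by rw [List.length_replicate]; exact hlow)
    rw [List.map_replicate] at hfin
    exact qk_rect_mono m (by omega) hfin

lemma qk_rect_swap (m n : ℕ) : qk 2 (Icc 1 m ×ˢ Icc 1 n) = qk 2 (Icc 1 n ×ˢ Icc 1 m) := by
  have h : ∀ a b : ℕ, qk 2 (Icc 1 a ×ˢ Icc 1 b) ≤ qk 2 (Icc 1 b ×ˢ Icc 1 a) := by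
    intro a b
    have := qk_two_swap _ _ (le_refl (qk 2 (Icc 1 b ×ˢ Icc 1 a)))
    rwa [image_swap_product] at this
  exact le_antisymm (h m n) (h n m)

lemma le_T2_tau2 (x : ℕ) : x ≤ T2 (tau2 x) :=
  Nat.sInf_mem (s := {t : ℕ | x ≤ T2 t}) ⟨x, by
    have := two_mul_T2 x
    change x ≤ T2 x
    nlinarith [Nat.zero_le x, x.le_mul_self]⟩

lemma tau2_le {x t : ℕ} (h : x ≤ T2 t) : tau2 x ≤ t := Nat.sInf_le h

lemma tau2_le_qk (m n : ℕ) : tau2 (m * n) ≤ qk 2 (Icc 1 m ×ˢ Icc 1 n) :=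
  tau2_le (by simpa using card_le_T2 _ (Icc 1 m ×ˢ Icc 1 n) le_rfl)

lemma qk_eq_of_le_six {m n : ℕ} (hm : 1 ≤ m) (hm6 : m ≤ 6) :
    qk 2 (Icc 1 m ×ˢ Icc 1 n) = if m = 6 ∧ n = 6 then 9 else tau2 (m * n) := by
  have up : ∀ {m n t : ℕ}, 1 ≤ m → m ≤ 6 → m * n ≤ T2 t → ¬ (m = 6 ∧ t = 8) →
      qk 2 (Icc 1 m ×ˢ Icc 1 n) ≤ t := by
    intro m n t h1 h2 h3 h4
    rw [← cells_replicate]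
    exact qk_rect_le (by simp; omega) t n h3 h4
  split_ifs with h
  · obtain ⟨rfl, rfl⟩ := h
    exact le_antisymm (up (by omega) le_rfl (by decide) (by omega)) nine_le_six_six
  · refine le_antisymm ?_ (tau2_le_qk m n)
    have hle := le_T2_tau2 (m * n)
    by_cases h8 : m = 6 ∧ tau2 (m * n) = 8
    · -- only `n = 5` remains interesting, and the `5 × 6` rectangle is covered
      obtain ⟨rfl, h8⟩ := h8
      rw [h8] at hle ⊢
      have h36 : T2 8 = 36 := by decide
      rw [qk_rect_swap]
      have h28 : ¬ 6 * n ≤ T2 7 := fun hc => by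
        have := tau2_le hc
        omega
      have : T2 7 = 28 := by decide
      obtain rfl : n = 5 := by omega
      exact up (by omega) (by omega) (by omega) (by omega)
    · exact up hm hm6 hle h8

theorem q2_grid (m n : ℕ) (hm : 1 ≤ m) (hn : 1 ≤ n) (h : m ≤ 6 ∨ n ≤ 6) :
    qk 2 ((Finset.Icc 1 m) ×ˢ (Finset.Icc 1 n)) =
      if m = 6 ∧ n = 6 then 9 else tau2 (m * n) := by
  rcases h with h | h
  · exact qk_eq_of_le_six hm h
  · rw [qk_rect_swap, qk_eq_of_le_six hn h, mul_comm n m]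
    simp only [and_comm]
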